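/- Let k be a field. Consider the injective ring homomorphism k[x][[y]] → k[x,1/x][[y]] obtained by applying the inclusion of polynomials into Laurent polynomials to each power series coefficient. Then there exists an element f of k[x,1/x][[y]] that is transcendental over k[x][[y]]; i.e., f satisfies no nonzero polynomial equation with coefficients in the image of k[x][[y]]. Consequently the fraction field of k[x,1/x][[y]] is a transcendental (non-algebraic) extension of the fraction field of k[x][[y]]. -/

import Mathlib

open PowerSeries in
theorem aux_gap (d j D : ℕ) : ∃ b ∈ Set.range (fun i : ℕ => (i+1).factorial), D ≤ b ∧
    (∀ n ∈ Set.range (fun i : ℕ => (i+1).factorial), n < b → n + D ≤ b) ∧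
    (∀ n ∈ Set.range (fun i : ℕ => (i+1).factorial), b < n → d * b + j + 1 ≤ n) := by
  obtain ⟨M, hM⟩ : ∃ M, M = d + j + D := ⟨_, rfl⟩
  have h1 : (M+2).factorial = (M+2) * (M+1).factorial := Nat.factorial_succ _
  have h2 : (M+3).factorial = (M+3) * (M+2).factorial := Nat.factorial_succ _
  have p1 : 0 < (M+1).factorial := Nat.factorial_pos _
  have p2 : 0 < (M+2).factorial := Nat.factorial_pos _
  refine ⟨(M+2).factorial, ⟨M+1, rfl⟩, ?_, ?_, ?_⟩
  · nlinarith
  · rintro _ ⟨i, rfl⟩ h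
    have hi : i + 1 ≤ M + 1 := by
      by_contra hc
      exact absurd (Nat.factorial_le (show M + 2 ≤ i + 1 by omega)) (not_le.mpr h)
    have := Nat.factorial_le hi
    simp only
    nlinarith
  · rintro _ ⟨i, rfl⟩ h
    have hi : M + 3 ≤ i + 1 := by
      by_contra hc
      exact absurd (Nat.factorial_le (show i + 1 ≤ M + 2 by omega)) (not_le.mpr h)
    have := Nat.factorial_le hi
    simp only
    nlinarith

open scoped Classical in
theorem aux_transc (k : Type*) [Field k] :
    letI : Algebra (PowerSeries (Polynomial k)) (PowerSeries (LaurentPolynomial k)) :=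
        (PowerSeries.map
          (Polynomial.toLaurent : Polynomial k →+* LaurentPolynomial k)).toAlgebra;
      ∃ f : PowerSeries (LaurentPolynomial k),
        Transcendental (PowerSeries (Polynomial k)) f := by
  letI : Algebra (PowerSeries (Polynomial k)) (PowerSeries (LaurentPolynomial k)) :=
        (PowerSeries.map
          (Polynomial.toLaurent : Polynomial k →+* LaurentPolynomial k)).toAlgebra
  let S : Set ℕ := Set.range (fun i : ℕ => (i+1).factorial)
  let f : PowerSeries (LaurentPolynomial k) :=
    PowerSeries.mk fun n => if n ∈ S then LaurentPolynomial.T (-(n:ℤ)) else 0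
  refine ⟨f, ?_⟩
  rw [transcendental_iff]
  intro p hp
  by_contra hp0
  set d := p.natDegree with hd
  have hc : p.coeff d ≠ 0 := by
    rw [hd, Polynomial.coeff_natDegree]; exact Polynomial.leadingCoeff_ne_zero.mpr hp0
  obtain ⟨j, hj⟩ : ∃ j, PowerSeries.coeff j (p.coeff d) ≠ 0 := by
    by_contra! h
    exact hc (PowerSeries.ext (by simpa using h))
  -- every power of `x` divides the coefficient
  have key : ∀ D : ℕ, (Polynomial.X : Polynomial k) ^ D ∣ PowerSeries.coeff j (p.coeff d) := by
    intro D
    obtain ⟨b, hbS, hDb, hlow, hhigh⟩ := aux_gap d j D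
    let Q : PowerSeries (Polynomial k) :=
      PowerSeries.mk fun n => if n ∈ S ∧ n ≤ b then Polynomial.X ^ (b - n) else 0
    let P : PowerSeries (LaurentPolynomial k) :=
      PowerSeries.mk fun n => if n ∈ S ∧ n ≤ b then LaurentPolynomial.T (-(n:ℤ)) else 0
    let x : PowerSeries (Polynomial k) := PowerSeries.C Polynomial.X
    have hQP : algebraMap _ (PowerSeries (LaurentPolynomial k)) Q
        = algebraMap _ (PowerSeries (LaurentPolynomial k)) (x ^ b) * P := by
      change PowerSeries.map _ Q = PowerSeries.map _ (x ^ b) * P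
      have : PowerSeries.map (Polynomial.toLaurent : Polynomial k →+* LaurentPolynomial k) (x ^ b)
          = PowerSeries.C (LaurentPolynomial.T (b : ℤ)) := by
        simp [x, PowerSeries.map_C, ← map_pow]
      rw [this]
      ext1 n
      rw [PowerSeries.coeff_C_mul, PowerSeries.coeff_map]
      simp only [Q, P, PowerSeries.coeff_mk]
      split_ifs with h
      · rw [Polynomial.toLaurent_X_pow, ← LaurentPolynomial.T_add]
        congr 1
        have := h.2
        omega
      · simp
    have hPf : (PowerSeries.X : PowerSeries (LaurentPolynomial k)) ^ (d * b + j + 1) ∣ P - f := by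
      rw [PowerSeries.X_pow_dvd_iff]
      intro m hm
      simp only [P, f, map_sub, PowerSeries.coeff_mk]
      by_cases hmS : m ∈ S
      · have : m ≤ b := by
          by_contra hcon
          have := hhigh m hmS (by omega)
          omega
        simp [hmS, this]
      · simp [hmS]
    have hQ : x ^ D ∣ Q - PowerSeries.X ^ b := by
      refine ⟨PowerSeries.mk fun n => if n ∈ S ∧ n < b then Polynomial.X ^ (b - n - D) else 0, ?_⟩
      ext1 n
      rw [show x ^ D = PowerSeries.C (Polynomial.X ^ D) by simp [x], PowerSeries.coeff_C_mul]
      simp only [Q, map_sub, PowerSeries.coeff_mk, PowerSeries.coeff_X_pow]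
      by_cases hnS : n ∈ S
      · rcases lt_trichotomy n b with h | h | h
        · have := hlow n hnS h
          simp only [hnS, h, h.le, h.ne, and_self, if_true, if_false, sub_zero]
          rw [← pow_add]; congr 1; omega
        · subst h; simp [hnS]
        · simp [hnS, h.not_ge, h.not_gt, h.ne']
      · have : n ≠ b := fun h => hnS (h ▸ hbS)
        simp [hnS, this]
    let s : PowerSeries (Polynomial k) :=
      ∑ i ∈ Finset.range (d + 1), p.coeff i * x ^ ((d - i) * b) * Q ^ i
    have hs1 : algebraMap _ (PowerSeries (LaurentPolynomial k)) s
        = algebraMap _ (PowerSeries (LaurentPolynomial k)) (x ^ (d * b)) * Polynomial.aeval P p := by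
      rw [Polynomial.aeval_eq_sum_range, Finset.mul_sum, map_sum]
      refine Finset.sum_congr rfl fun i hi => ?_
      have hi' : i ≤ d := by simpa [Nat.lt_succ_iff] using hi
      rw [map_mul, map_mul, map_pow _ Q, hQP, Algebra.smul_def, mul_pow, ← map_pow _ (x ^ b), ← pow_mul,
        show d * b = (d - i) * b + b * i by rw [mul_comm b i, ← add_mul]; congr 1; omega,
        pow_add, map_mul]
      ring
    have hs2 : (PowerSeries.X : PowerSeries (LaurentPolynomial k)) ^ (d * b + j + 1) ∣
        algebraMap _ (PowerSeries (LaurentPolynomial k)) s := by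
      rw [hs1]
      refine Dvd.dvd.mul_left ?_ _
      have h := Polynomial.sub_dvd_eval_sub P f (p.map (algebraMap _ _))
      rw [Polynomial.eval_map_algebraMap, Polynomial.eval_map_algebraMap, hp, sub_zero] at h
      exact hPf.trans h
    have hs3 : PowerSeries.coeff (j + d * b) s = 0 := by
      have h := PowerSeries.X_pow_dvd_iff.mp hs2 (j + d * b) (by omega)
      change PowerSeries.coeff (j + d * b) (PowerSeries.map _ s) = 0 at h
      rw [PowerSeries.coeff_map] at h
      exact Polynomial.toLaurent_injective (by rw [h, map_zero])
    have hs4 : x ^ D ∣ s - p.coeff d * PowerSeries.X ^ (d * b) := by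
      have h1 : x ^ D ∣ Q ^ d - PowerSeries.X ^ (d * b) := by
        rw [mul_comm d b, pow_mul]
        exact hQ.trans (sub_dvd_pow_sub_pow _ _ _)
      have h2 : x ^ D ∣ ∑ i ∈ Finset.range d, p.coeff i * x ^ ((d - i) * b) * Q ^ i := by
        refine Finset.dvd_sum fun i hi => ?_
        have hi' := Finset.mem_range.mp hi
        refine Dvd.dvd.mul_right (Dvd.dvd.mul_left (pow_dvd_pow _ ?_) _) _
        have : 1 ≤ d - i := by omega
        nlinarith
      have h3 : s - p.coeff d * PowerSeries.X ^ (d * b)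
          = (∑ i ∈ Finset.range d, p.coeff i * x ^ ((d - i) * b) * Q ^ i)
            + p.coeff d * (Q ^ d - PowerSeries.X ^ (d * b)) := by
        simp only [s, Finset.sum_range_succ, Nat.sub_self, zero_mul, pow_zero, mul_one]
        ring
      rw [h3]
      exact dvd_add h2 (h1.mul_left _)
    obtain ⟨u, hu⟩ := hs4
    have h := congrArg (PowerSeries.coeff (j + d * b)) hu
    rw [map_sub, hs3, PowerSeries.coeff_mul_X_pow,
      show x ^ D = PowerSeries.C (Polynomial.X ^ D) by simp [x], PowerSeries.coeff_C_mul,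
      zero_sub] at h
    exact (dvd_neg.mp ⟨_, h⟩)
  have hk := key ((PowerSeries.coeff j (p.coeff d)).natDegree + 1)
  have := Polynomial.natDegree_le_of_dvd hk hj
  rw [Polynomial.natDegree_X_pow] at this
  omega

theorem aux_frac {A B : Type*} [CommRing A] [IsDomain A] [CommRing B] [IsDomain B] [Algebra A B]
    [Algebra (FractionRing A) (FractionRing B)]
    [IsScalarTower A (FractionRing A) (FractionRing B)] {f : B} (hf : Transcendental A f) :
    ¬ Algebra.IsAlgebraic (FractionRing A) (FractionRing B) := by
  intro h
  have h1 := h.isAlgebraic (algebraMap B (FractionRing B) f)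
  rw [← IsFractionRing.isAlgebraic_iff A (FractionRing A) (FractionRing B)] at h1
  exact hf ((isAlgebraic_algebraMap_iff (IsFractionRing.injective B (FractionRing B))).mp h1)

set_option maxHeartbeats 1000000 in
/-- Over any field `k`, the coefficientwise inclusion
`k[x][[y]] → k[x,1/x][[y]]` admits transcendental elements: there is an
`f ∈ k[x,1/x][[y]]` satisfying no nonzero polynomial equation over `k[x][[y]]`,
and consequently the induced extension of fraction fields is not algebraic. -/
theorem statement10 (k : Type*) [Field k]
    (hinj : Function.Injective
      ((algebraMap (PowerSeries (LaurentPolynomial k))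
          (FractionRing (PowerSeries (LaurentPolynomial k)))).comp
        (PowerSeries.map (Polynomial.toLaurent : Polynomial k →+* LaurentPolynomial k)))) :
    (letI : Algebra (PowerSeries (Polynomial k)) (PowerSeries (LaurentPolynomial k)) :=
        (PowerSeries.map
          (Polynomial.toLaurent : Polynomial k →+* LaurentPolynomial k)).toAlgebra;
      ∃ f : PowerSeries (LaurentPolynomial k),
        Transcendental (PowerSeries (Polynomial k)) f) ∧
    (letI : Algebra (FractionRing (PowerSeries (Polynomial k)))
        (FractionRing (PowerSeries (LaurentPolynomial k))) :=
        (IsFractionRing.lift hinj :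
          FractionRing (PowerSeries (Polynomial k)) →+*
            FractionRing (PowerSeries (LaurentPolynomial k))).toAlgebra;
      ¬ Algebra.IsAlgebraic (FractionRing (PowerSeries (Polynomial k)))
          (FractionRing (PowerSeries (LaurentPolynomial k)))) := by
  letI : Algebra (PowerSeries (Polynomial k)) (PowerSeries (LaurentPolynomial k)) :=
        (PowerSeries.map
          (Polynomial.toLaurent : Polynomial k →+* LaurentPolynomial k)).toAlgebra
  refine ⟨aux_transc k, ?_⟩
  letI : Algebra (FractionRing (PowerSeries (Polynomial k)))
        (FractionRing (PowerSeries (LaurentPolynomial k))) :=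
        (IsFractionRing.lift hinj :
          FractionRing (PowerSeries (Polynomial k)) →+*
            FractionRing (PowerSeries (LaurentPolynomial k))).toAlgebra
  haveI : IsScalarTower (PowerSeries (Polynomial k)) (FractionRing (PowerSeries (Polynomial k)))
      (FractionRing (PowerSeries (LaurentPolynomial k))) :=
    IsScalarTower.of_algebraMap_eq fun a => (IsFractionRing.lift_algebraMap hinj a).symm
  obtain ⟨f, hf⟩ := aux_transc k
  exact aux_frac hf
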